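/- A real α ∈ (0,1) is left-c.e. speedable if and only if α is covered by a Solovay test that has bounded increments, i.e., a Solovay test {[ℓ_i, r_i]} for which there is a rational d > 0 with ℓ_{i+1} ≥ ℓ_i + d(r_i − ℓ_i) for all i. -/

import Mathlib

open Filter

/-- A computable approximation of a real `α`: a computable sequence of
rationals in `[0,1]` converging to `α`. -/
def IsCompApprox (a : ℕ → ℚ) (α : ℝ) : Prop :=
  Computable a ∧ (∀ s, a s ∈ Set.Icc (0 : ℚ) 1) ∧
    Tendsto (fun s => (a s : ℝ)) atTop (nhds α)

/-- A d.c.e. approximation: a computable approximation with bounded variation. -/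
def IsDCEApprox (a : ℕ → ℚ) (α : ℝ) : Prop :=
  IsCompApprox a α ∧ Summable (fun s => |(a (s + 1) : ℝ) - (a s : ℝ)|)

/-- A computable order: a nondecreasing unbounded computable function. -/
def IsComputableOrder (f : ℕ → ℕ) : Prop :=
  Computable f ∧ Monotone f ∧ Tendsto f atTop atTop

/-- The liminf (in the extended reals) of `|(α - a (f s)) / (α - a s)|`. -/
noncomputable def speedLiminf (a : ℕ → ℚ) (f : ℕ → ℕ) (α : ℝ) : EReal :=
  Filter.liminf (fun s => ((|(α - (a (f s) : ℝ)) / (α - (a s : ℝ))| : ℝ) : EReal)) atTop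

/-- A computable approximation `a` of `α` is `ρ`-speedable. -/
def IsRhoSpeedable (a : ℕ → ℚ) (α : ℝ) (ρ : ℚ) : Prop :=
  (∃ q : ℚ, α = (q : ℝ)) ∨
    ∃ f, IsComputableOrder f ∧ speedLiminf a f α ≤ (((ρ : ℝ) : EReal))

/-- A computable approximation is speedable if it is `ρ`-speedable for some rational
`ρ ∈ [0,1)`. -/
def IsSpeedable (a : ℕ → ℚ) (α : ℝ) : Prop :=
  ∃ ρ : ℚ, 0 ≤ ρ ∧ ρ < 1 ∧ IsRhoSpeedable a α ρ

/-- A Solovay test: computable sequences of rationals `l i ≤ r i` in `[0,1]`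
with `Σ (r i - l i) < ∞`. -/
structure SolovayTest where
  l : ℕ → ℚ
  r : ℕ → ℚ
  comp_l : Computable l
  comp_r : Computable r
  mem_l : ∀ i, l i ∈ Set.Icc (0 : ℚ) 1
  mem_r : ∀ i, r i ∈ Set.Icc (0 : ℚ) 1
  le : ∀ i, l i ≤ r i
  summable : Summable (fun i => (r i : ℝ) - (l i : ℝ))

/-- A real `γ` is covered by a Solovay test if `γ ∈ [l i, r i]` for infinitely many `i`. -/
def SolovayTest.Covers (T : SolovayTest) (γ : ℝ) : Prop :=
  ∃ᶠ i in atTop, γ ∈ Set.Icc (T.l i : ℝ) (T.r i : ℝ)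

/-- The sequence of endpoints `l 0, r 0, l 1, r 1, …` of a Solovay test. -/
def SolovayTest.endpoints (T : SolovayTest) (n : ℕ) : ℚ :=
  if n % 2 = 0 then T.l (n / 2) else T.r (n / 2)

/-!
Both sides are equivalent to the existence of a left-c.e. approximation `b` of `α` whose error
`α - b k` shrinks by a fixed factor `σ < 1` in a single step, for infinitely many `k`. Such a `b`
is a speedable approximation with the successor as order. The interval starting at `b k` whose length
is `C` times the step `b (k + 1) - b k` contains `α` precisely when step `k` shrinks the error to
at most `1 - 1 / C` times its value; the steps sum to at most `1`, so these intervals form a test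
with bounded increments, and conversely the left endpoints of a covering test with bounded
increments form such a `b`. Finally, if a speed-up `f` shrinks the error by the factor `σ ^ 2`
infinitely often, sampling along stages `S` with `f (S n) ≤ S (n + 1)` spreads each such gain over
two consecutive steps, one of which shrinks the error by `σ`.
-/

section ComputableFunctions

variable {α β : Type*} [Primcodable α] [Primcodable β]

theorem computablePred_eq {f g : α → β} (hf : Computable f) (hg : Computable g) :
    ComputablePred fun a => f a = g a := by
  classical
  exact Computable.computablePred (Primrec.eq.decide.to_comp.comp hf hg)

theorem computable_of_computablePred_graph {f : α → β}
    (hf : ComputablePred fun p : α × β => f p.1 = p.2) : Computable f := by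
  classical
  have hdecode : ComputablePred fun p : α × ℕ => Encodable.decode p.2 = some (f p.1) := by
    have hcases : Computable fun p : α × ℕ =>
        Option.casesOn (motive := fun _ => Bool) (Encodable.decode (α := β) p.2) false
          fun b => decide (f p.1 = b) :=
      .option_casesOn (Computable.decode.comp .snd) (.const false)
        (hf.decide.comp ((Computable.fst.comp .fst).pair .snd)).to₂
    refine (hcases.of_eq fun p => ?_).computablePred
    cases Encodable.decode (α := β) p.2 <;> simp [eq_comm]
  have hex (a : α) : ∃ n, Encodable.decode n = some (f a) := ⟨_, Encodable.encodek _⟩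
  exact Computable.option_some_iff.1 <|
    (Computable.decode.comp (Computable.find hdecode hex)).of_eq fun a => Nat.find_spec (hex a)

end ComputableFunctions

theorem computable_coe_subtype_ofNat {s : Set ℕ} [Infinite s] [DecidablePred (· ∈ s)]
    (hs : ComputablePred (· ∈ s)) : Computable fun n => (Nat.Subtype.ofNat s n : ℕ) := by
  have hgap (m : ℕ) : ∃ k, m + k + 1 ∈ s := by
    obtain ⟨n, hn, hmn⟩ := (Set.infinite_coe_iff.1 ‹Infinite s›).exists_gt m
    obtain ⟨k, rfl⟩ := Nat.exists_eq_add_of_lt hmn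
    exact ⟨k, hn⟩
  have hnext : Computable fun m => m + Nat.find (hgap m) + 1 := by
    refine Computable.succ.comp (Primrec.nat_add.to_comp.comp .id (Computable.find ?_ hgap))
    exact (hs.decide.comp
      (Computable.succ.comp (Primrec.nat_add.to_comp.comp .fst .snd))).computablePred
  refine (Computable.nat_rec .id (.const (Nat.Subtype.ofNat s 0 : ℕ))
    (hnext.comp (Computable.snd.comp .snd)).to₂).of_eq fun n => ?_
  induction n with
  | zero => rfl
  | succ n ih => simp only [id] at ih ⊢; rw [ih]; rfl

/- `Denumerable.ofEncodableOfInfinite` numbers `α` by listing the range of `e.encode` in increasing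
order, so the original code of the `n`-th element is found by searching for the `n`-th member of
that range. -/
theorem computable_encode_of_computablePred_range {α : Type*} [e : Encodable α] [Infinite α]
    (h : ComputablePred (· ∈ Set.range (e.encode : α → ℕ))) :
    letI := Denumerable.ofEncodableOfInfinite α
    Computable (e.encode : α → ℕ) := by
  let := Encodable.decidableRangeEncode α
  have : Infinite (Set.range (e.encode : α → ℕ)) :=
    (Set.infinite_range_of_injective e.encode_injective).to_subtype
  let rangeDenumerable := Nat.Subtype.denumerable (Set.range (e.encode : α → ℕ))
  let := Denumerable.ofEncodableOfInfinite α
  refine ((computable_coe_subtype_ofNat h).comp Computable.encode).of_eq fun a => ?_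
  exact congrArg Subtype.val (rangeDenumerable.ofNat_encode (Encodable.equivRangeEncode α a))

section IntegerArithmetic

theorem encode_int_natCast (n : ℕ) : Encodable.encode (n : ℤ) = 2 * n := rfl

theorem encode_int_negSucc (n : ℕ) : Encodable.encode (Int.negSucc n) = 2 * n + 1 := rfl

theorem primrec_int_natCast : Primrec fun n : ℕ => (n : ℤ) :=
  Primrec.encode_iff.1 (Primrec.nat_mul.comp (.const 2) .id)

theorem primrec_int_natAbs : Primrec Int.natAbs := by
  have hcode : Primrec fun z : ℤ => (Encodable.encode z + 1) / 2 :=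
    Primrec.nat_div.comp (Primrec.succ.comp .encode) (.const 2)
  refine hcode.of_eq fun z => ?_
  cases z with
  | ofNat n => rw [Int.ofNat_eq_natCast, encode_int_natCast]; omega
  | negSucc n => rw [encode_int_negSucc]; omega

theorem primrec_int_toNat : Primrec Int.toNat := by
  have hcode : Primrec fun z : ℤ =>
      if Encodable.encode z % 2 = 0 then Encodable.encode z / 2 else 0 :=
    .ite (Primrec.eq.comp (Primrec.nat_mod.comp .encode (.const 2)) (.const 0))
      (Primrec.nat_div.comp .encode (.const 2)) (.const 0)
  refine hcode.of_eq fun z => ?_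
  cases z with
  | ofNat n => rw [Int.ofNat_eq_natCast, encode_int_natCast]; simp
  | negSucc n => rw [encode_int_negSucc]; simp

theorem primrec_int_toNat_neg : Primrec fun z : ℤ => (-z).toNat :=
  (Primrec.nat_sub.comp primrec_int_natAbs primrec_int_toNat).of_eq fun z => by omega

theorem primrec_int_natCast_sub_natCast : Primrec₂ fun m n : ℕ => (m - n : ℤ) := by
  have hcode : Primrec fun p : ℕ × ℕ =>
      if p.2 ≤ p.1 then 2 * (p.1 - p.2) else 2 * (p.2 - p.1) - 1 :=
    .ite (Primrec.nat_le.comp .snd .fst)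
      (Primrec.nat_mul.comp (.const 2) (Primrec.nat_sub.comp .fst .snd))
      (Primrec.pred.comp (Primrec.nat_mul.comp (.const 2) (Primrec.nat_sub.comp .snd .fst)))
  refine Primrec.encode_iff.1 (hcode.of_eq fun ⟨m, n⟩ => ?_)
  dsimp only
  rcases le_or_gt n m with h | h
  · rw [if_pos h, ← Nat.cast_sub h, encode_int_natCast]
  · obtain ⟨k, rfl⟩ := Nat.exists_eq_add_of_lt h
    have hneg : (m : ℤ) - (m + k + 1 : ℕ) = Int.negSucc k := by omega
    rw [if_neg h.not_ge, hneg, encode_int_negSucc]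
    omega

theorem primrec_int_add : Primrec₂ fun z w : ℤ => z + w := by
  refine (primrec_int_natCast_sub_natCast.comp
    (Primrec.nat_add.comp (primrec_int_toNat.comp .fst) (primrec_int_toNat.comp .snd))
    (Primrec.nat_add.comp (primrec_int_toNat_neg.comp .fst)
      (primrec_int_toNat_neg.comp .snd))).of_eq fun ⟨z, w⟩ => ?_
  dsimp only
  omega

theorem primrec_int_mul : Primrec₂ fun z w : ℤ => z * w := by
  have hpos₁ : Primrec fun p : ℤ × ℤ => p.1.toNat := primrec_int_toNat.comp .fst
  have hpos₂ : Primrec fun p : ℤ × ℤ => p.2.toNat := primrec_int_toNat.comp .snd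
  have hneg₁ : Primrec fun p : ℤ × ℤ => (-p.1).toNat := primrec_int_toNat_neg.comp .fst
  have hneg₂ : Primrec fun p : ℤ × ℤ => (-p.2).toNat := primrec_int_toNat_neg.comp .snd
  refine (primrec_int_natCast_sub_natCast.comp
    (Primrec.nat_add.comp (Primrec.nat_mul.comp hpos₁ hpos₂) (Primrec.nat_mul.comp hneg₁ hneg₂))
    (Primrec.nat_add.comp (Primrec.nat_mul.comp hpos₁ hneg₂)
      (Primrec.nat_mul.comp hneg₁ hpos₂))).of_eq fun ⟨z, w⟩ => ?_
  conv_rhs => rw [← Int.toNat_sub_toNat_neg z, ← Int.toNat_sub_toNat_neg w]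
  push_cast
  ring

theorem primrecRel_int_le : PrimrecRel fun z w : ℤ => z ≤ w := by
  refine (Primrec.nat_le.comp
    (Primrec.nat_add.comp (primrec_int_toNat.comp .fst) (primrec_int_toNat_neg.comp .snd))
    (Primrec.nat_add.comp (primrec_int_toNat.comp .snd)
      (primrec_int_toNat_neg.comp .fst))).of_eq fun ⟨z, w⟩ => ?_
  dsimp only
  omega

end IntegerArithmetic

section RationalArithmetic

theorem primrecRel_coprime : PrimrecRel Nat.Coprime := by
  have hdvd : PrimrecRel fun k n : ℕ => k ∣ n :=
    (Primrec.eq.comp (Primrec.nat_mod.comp .snd .fst) (.const 0)).of_eq fun _ =>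
      (Nat.dvd_iff_mod_eq_zero ..).symm
  have hcommon : PrimrecRel fun (k : ℕ) (p : ℕ × ℕ) => ¬(k ∣ p.1 ∧ k ∣ p.2) ∨ k = 1 :=
    .or (.not (.and (hdvd.comp .fst (Primrec.fst.comp .snd))
      (hdvd.comp .fst (Primrec.snd.comp .snd)))) (Primrec.eq.comp .fst (.const 1))
  have hrange : Primrec fun p : ℕ × ℕ => List.range (p.1 + p.2 + 1) :=
    Primrec.list_range.comp (Primrec.succ.comp (Primrec.nat_add.comp .fst .snd))
  refine (hcommon.forall_mem_list.comp hrange .id).of_eq fun ⟨m, n⟩ =>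
    ⟨fun h => ?_, fun h k _ => ?_⟩
  · have hle : Nat.gcd m n ≤ m + n := by
      rcases Nat.eq_zero_or_pos m with rfl | hm
      · simp
      · exact (Nat.gcd_le_left n hm).trans (Nat.le_add_right m n)
    exact (h _ (List.mem_range.2 (Nat.lt_succ_of_le hle))).resolve_left
      (not_not_intro ⟨Nat.gcd_dvd_left m n, Nat.gcd_dvd_right m n⟩)
  · exact or_iff_not_imp_left.2 fun hk =>
      Nat.eq_one_of_dvd_coprimes h (not_not.1 hk).1 (not_not.1 hk).2

theorem rat_encode_eq_pair (q : ℚ) :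
    Rat.instEncodable.encode q = Nat.pair (Encodable.encode q.num) q.den := rfl

theorem mem_range_rat_encode_iff {n : ℕ} :
    n ∈ Set.range Rat.instEncodable.encode ↔
      0 < n.unpair.2 ∧ (Denumerable.ofNat ℤ n.unpair.1).natAbs.Coprime n.unpair.2 := by
  constructor
  · rintro ⟨q, rfl⟩
    rw [rat_encode_eq_pair, Nat.unpair_pair, Denumerable.ofNat_encode]
    exact ⟨q.den_pos, q.reduced⟩
  · rintro ⟨hpos, hcop⟩
    refine ⟨⟨_, _, hpos.ne', hcop⟩, ?_⟩
    rw [rat_encode_eq_pair, Denumerable.encode_ofNat, Nat.pair_unpair]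

/- The `Primcodable` structure on `ℚ` comes from its `Denumerable` instance, whose codes are not the
pairs `(num, den)` of `Rat.instEncodable`. -/
theorem computable_rat_encode : Computable (Rat.instEncodable.encode : ℚ → ℕ) := by
  refine computable_encode_of_computablePred_range ?_
  have hreduced : PrimrecPred fun n : ℕ =>
      0 < n.unpair.2 ∧ (Denumerable.ofNat ℤ n.unpair.1).natAbs.Coprime n.unpair.2 :=
    .and (Primrec.nat_lt.comp (.const 0) (Primrec.snd.comp .unpair))
      (primrecRel_coprime.comp
        (primrec_int_natAbs.comp ((Primrec.ofNat ℤ).comp (Primrec.fst.comp .unpair)))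
        (Primrec.snd.comp .unpair))
  exact hreduced.computablePred.of_eq fun _ => mem_range_rat_encode_iff.symm

theorem computable_rat_num : Computable Rat.num :=
  ((Primrec.ofNat ℤ).to_comp.comp
    (Computable.fst.comp (Computable.unpair.comp computable_rat_encode))).of_eq fun q => by
      rw [rat_encode_eq_pair, Nat.unpair_pair, Denumerable.ofNat_encode]

theorem computable_rat_den : Computable Rat.den :=
  (Computable.snd.comp (Computable.unpair.comp computable_rat_encode)).of_eq fun q => by
    rw [rat_encode_eq_pair, Nat.unpair_pair]

theorem computable_rat_den_intCast : Computable fun q : ℚ => (q.den : ℤ) :=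
  primrec_int_natCast.to_comp.comp computable_rat_den

theorem rat_add_eq_iff {x y z : ℚ} :
    x + y = z ↔ (x.num * y.den + y.num * x.den) * z.den = z.num * (x.den * y.den) := by
  have hx : (x.den : ℚ) ≠ 0 := Nat.cast_ne_zero.2 x.den_nz
  have hy : (y.den : ℚ) ≠ 0 := Nat.cast_ne_zero.2 y.den_nz
  have hz : (z.den : ℚ) ≠ 0 := Nat.cast_ne_zero.2 z.den_nz
  conv_lhs => rw [← x.num_div_den, ← y.num_div_den, ← z.num_div_den]
  rw [div_add_div _ _ hx hy, div_eq_div_iff (mul_ne_zero hx hy) hz, mul_comm (x.den : ℚ) y.num]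
  exact_mod_cast Iff.rfl

theorem rat_mul_eq_iff {x y z : ℚ} :
    x * y = z ↔ x.num * y.num * z.den = z.num * (x.den * y.den) := by
  have hx : (x.den : ℚ) ≠ 0 := Nat.cast_ne_zero.2 x.den_nz
  have hy : (y.den : ℚ) ≠ 0 := Nat.cast_ne_zero.2 y.den_nz
  have hz : (z.den : ℚ) ≠ 0 := Nat.cast_ne_zero.2 z.den_nz
  conv_lhs => rw [← x.num_div_den, ← y.num_div_den, ← z.num_div_den]
  rw [div_mul_div_comm, div_eq_div_iff (mul_ne_zero hx hy) hz]
  exact_mod_cast Iff.rfl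

theorem computable_rat_add : Computable₂ fun x y : ℚ => x + y := by
  have hmul := primrec_int_mul.to_comp
  have hfst : Computable fun p : (ℚ × ℚ) × ℚ => p.1.1 := Computable.fst.comp .fst
  have hsnd : Computable fun p : (ℚ × ℚ) × ℚ => p.1.2 := Computable.snd.comp .fst
  exact computable_of_computablePred_graph <| (computablePred_eq
    (hmul.comp
      (primrec_int_add.to_comp.comp
        (hmul.comp (computable_rat_num.comp hfst) (computable_rat_den_intCast.comp hsnd))
        (hmul.comp (computable_rat_num.comp hsnd) (computable_rat_den_intCast.comp hfst)))
      (computable_rat_den_intCast.comp .snd))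
    (hmul.comp (computable_rat_num.comp .snd)
      (hmul.comp (computable_rat_den_intCast.comp hfst)
        (computable_rat_den_intCast.comp hsnd)))).of_eq fun _ => rat_add_eq_iff.symm

theorem computable_rat_sub : Computable₂ fun x y : ℚ => x - y :=
  computable_of_computablePred_graph <|
    (computablePred_eq (Computable.fst.comp .fst)
      (computable_rat_add.comp .snd (Computable.snd.comp .fst))).of_eq fun _ =>
        sub_eq_iff_eq_add.symm

theorem computable_rat_mul : Computable₂ fun x y : ℚ => x * y := by
  have hmul := primrec_int_mul.to_comp
  have hfst : Computable fun p : (ℚ × ℚ) × ℚ => p.1.1 := Computable.fst.comp .fst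
  have hsnd : Computable fun p : (ℚ × ℚ) × ℚ => p.1.2 := Computable.snd.comp .fst
  exact computable_of_computablePred_graph <| (computablePred_eq
    (hmul.comp
      (hmul.comp (computable_rat_num.comp hfst) (computable_rat_num.comp hsnd))
      (computable_rat_den_intCast.comp .snd))
    (hmul.comp (computable_rat_num.comp .snd)
      (hmul.comp (computable_rat_den_intCast.comp hfst)
        (computable_rat_den_intCast.comp hsnd)))).of_eq fun _ => rat_mul_eq_iff.symm

theorem computablePred_rat_le : ComputablePred fun p : ℚ × ℚ => p.1 ≤ p.2 := by
  have hle : ComputablePred fun p : ℚ × ℚ => p.1.num * p.2.den ≤ p.2.num * p.1.den :=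
    (primrecRel_int_le.decide.to_comp.comp
      (primrec_int_mul.to_comp.comp (computable_rat_num.comp .fst)
        (computable_rat_den_intCast.comp .snd))
      (primrec_int_mul.to_comp.comp (computable_rat_num.comp .snd)
        (computable_rat_den_intCast.comp .fst))).computablePred
  exact hle.of_eq fun p => (Rat.le_iff p.1 p.2).symm

theorem computable_rat_min : Computable₂ fun x y : ℚ => min x y :=
  (Computable.cond computablePred_rat_le.decide .fst .snd).of_eq fun p => by
    simp only [Bool.cond_decide, min_def]

end RationalArithmetic

/-- A left-c.e. approximation of `α`: a nondecreasing computable approximation. -/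
structure IsLeftCEApprox (a : ℕ → ℚ) (α : ℝ) : Prop where
  isCompApprox : IsCompApprox a α
  monotone : Monotone a

/-- Infinitely often a single step of `b` shrinks the distance to `α` by a fixed factor. This is
speedability along the successor function, written without division and without absolute values,
so it is meant for sequences approximating `α` from below. -/
def IsSuccSpeedable (b : ℕ → ℚ) (α : ℝ) : Prop :=
  ∃ σ : ℝ, σ < 1 ∧ ∃ᶠ k in atTop, α - b (k + 1) ≤ σ * (α - b k)

namespace IsLeftCEApprox

variable {a : ℕ → ℚ} {α : ℝ}

theorem monotone_cast (ha : IsLeftCEApprox a α) : Monotone fun s => (a s : ℝ) :=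
  Rat.cast_mono.comp ha.monotone

theorem cast_le (ha : IsLeftCEApprox a α) (s : ℕ) : (a s : ℝ) ≤ α :=
  ha.monotone_cast.ge_of_tendsto ha.isCompApprox.2.2 s

theorem antitone_sub (ha : IsLeftCEApprox a α) : Antitone fun s => α - a s :=
  fun _ _ h => sub_le_sub_left (ha.monotone_cast h) α

theorem le_one (ha : IsLeftCEApprox a α) : α ≤ 1 :=
  le_of_tendsto' ha.isCompApprox.2.2 fun s => mod_cast (ha.isCompApprox.2.1 s).2

theorem nonneg (ha : IsLeftCEApprox a α) : 0 ≤ α :=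
  ge_of_tendsto' ha.isCompApprox.2.2 fun s => mod_cast (ha.isCompApprox.2.1 s).1

theorem abs_sub (ha : IsLeftCEApprox a α) (s : ℕ) : |α - a s| = α - a s :=
  abs_of_nonneg (sub_nonneg.2 (ha.cast_le s))

theorem comp_strictMono {S : ℕ → ℕ} (ha : IsLeftCEApprox a α) (hSc : Computable S)
    (hS : StrictMono S) : IsLeftCEApprox (a ∘ S) α where
  isCompApprox := ⟨ha.isCompApprox.1.comp hSc, fun s => ha.isCompApprox.2.1 (S s),
    ha.isCompApprox.2.2.comp hS.tendsto_atTop⟩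
  monotone := ha.monotone.comp hS.monotone

theorem const {q : ℚ} (hq : q ∈ Set.Icc 0 1) : IsLeftCEApprox (fun _ => q) q where
  isCompApprox := ⟨Computable.const q, fun _ => hq, tendsto_const_nhds⟩
  monotone := monotone_const

end IsLeftCEApprox

section SpeedLiminf

variable {a : ℕ → ℚ} {f : ℕ → ℕ} {α ρ : ℝ}

theorem speedLiminf_le_of_frequently (hρ : 0 ≤ ρ)
    (h : ∃ᶠ s in atTop, |α - a (f s)| ≤ ρ * |α - a s|) : speedLiminf a f α ≤ ρ := by
  refine liminf_le_of_frequently_le' (h.mono fun s hs => ?_)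
  rw [EReal.coe_le_coe_iff, abs_div]
  exact div_le_of_le_mul₀ (abs_nonneg _) hρ hs

theorem frequently_lt_of_speedLiminf_lt (hα : ∀ s, (a s : ℝ) ≠ α) (h : speedLiminf a f α < ρ) :
    ∃ᶠ s in atTop, |α - a (f s)| < ρ * |α - a s| := by
  refine (frequently_lt_of_liminf_lt (by isBoundedDefault) h).mono fun s hs => ?_
  rwa [EReal.coe_lt_coe_iff, abs_div,
    div_lt_iff₀ (abs_pos.2 (sub_ne_zero.2 (hα s).symm))] at hs

end SpeedLiminf

section FastStages

variable {f : ℕ → ℕ}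

/-- Stages at which to sample an approximation sped up by `f`: each one is at least `f` of the
previous one, and the maximum makes the sequence strictly increasing. -/
def fastStages (f : ℕ → ℕ) : ℕ → ℕ
  | 0 => 0
  | n + 1 => max (f (fastStages f n)) (fastStages f n + 1)

theorem fastStages_strictMono (f : ℕ → ℕ) : StrictMono (fastStages f) :=
  strictMono_nat_of_lt_succ fun _ => Nat.lt_of_succ_le (le_max_right _ _)

theorem apply_fastStages_le_succ (f : ℕ → ℕ) (n : ℕ) : f (fastStages f n) ≤ fastStages f (n + 1) :=
  le_max_left _ _

theorem computable_fastStages (hf : Computable f) : Computable (fastStages f) := by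
  have hstage : Computable fun p : ℕ × ℕ × ℕ => p.2.2 := Computable.snd.comp .snd
  refine (Computable.nat_rec .id (.const 0) (Primrec.nat_max.to_comp.comp (hf.comp hstage)
    (Computable.succ.comp hstage)).to₂).of_eq fun n => ?_
  induction n with
  | zero => rfl
  | succ n ih => simp only [id] at ih ⊢; rw [ih]; rfl

/- If `S n ≤ s < S (n + 1)`, then `f s ≤ S (n + 2)`, so the speed-up at `s` by the factor `σ ^ 2`
is spread over two consecutive steps, one of which contracts by `σ`. -/
theorem frequently_fastStages_contract (hf : Monotone f) {e : ℕ → ℝ} (he : Antitone e) {σ : ℝ}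
    (hσ : 0 ≤ σ) (h : ∃ᶠ s in atTop, e (f s) ≤ σ ^ 2 * e s) :
    ∃ᶠ k in atTop, e (fastStages f (k + 1)) ≤ σ * e (fastStages f k) := by
  have hS := fastStages_strictMono f
  refine frequently_atTop.2 fun K => ?_
  obtain ⟨s, hKs, hs⟩ := frequently_atTop.1 h (fastStages f K)
  obtain ⟨n, hns, hsn⟩ := hS.exists_between_of_tendsto_atTop hS.tendsto_atTop
    (x := s + 1) (Nat.succ_pos s)
  have hKn : K ≤ n := Nat.lt_succ_iff.1 (hS.lt_iff_lt.1 (hKs.trans_lt hsn))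
  have htwo : e (fastStages f (n + 2)) ≤ σ ^ 2 * e (fastStages f n) :=
    calc e (fastStages f (n + 2))
      _ ≤ e (f s) := he ((hf (Nat.lt_of_succ_le hsn).le).trans (apply_fastStages_le_succ f (n + 1)))
      _ ≤ σ ^ 2 * e s := hs
      _ ≤ σ ^ 2 * e (fastStages f n) :=
        mul_le_mul_of_nonneg_left (he (Nat.lt_succ_iff.1 hns)) (sq_nonneg σ)
  by_cases hfirst : e (fastStages f (n + 1)) ≤ σ * e (fastStages f n)
  · exact ⟨n, hKn, hfirst⟩
  · refine ⟨n + 1, Nat.le_succ_of_le hKn, htwo.trans ?_⟩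
    rw [sq, mul_assoc]
    exact mul_le_mul_of_nonneg_left (not_le.1 hfirst).le hσ

end FastStages

theorem isSuccSpeedable_const (q : ℚ) : IsSuccSpeedable (fun _ => q) q :=
  ⟨0, zero_lt_one, .of_forall fun _ => by simp⟩

theorem IsLeftCEApprox.exists_isSuccSpeedable {a : ℕ → ℚ} {α : ℝ} (ha : IsLeftCEApprox a α)
    (h : IsSpeedable a α) : ∃ b, IsLeftCEApprox b α ∧ IsSuccSpeedable b α := by
  by_cases hα : ∃ q : ℚ, α = q
  · obtain ⟨q, rfl⟩ := hα
    exact ⟨fun _ => q, .const ⟨mod_cast ha.nonneg, mod_cast ha.le_one⟩, isSuccSpeedable_const q⟩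
  obtain ⟨ρ, hρ0, hρ1, hρ⟩ := h
  obtain ⟨f, ⟨hfc, hf, -⟩, hlim⟩ := hρ.resolve_left hα
  obtain ⟨ρ', hρρ', hρ'1⟩ := exists_between (show (ρ : ℝ) < 1 by exact_mod_cast hρ1)
  have hρ'0 : 0 ≤ ρ' := (Rat.cast_nonneg.2 hρ0).trans hρρ'.le
  have hfreq : ∃ᶠ s in atTop, α - a (f s) ≤ √ρ' ^ 2 * (α - a s) := by
    refine (frequently_lt_of_speedLiminf_lt (fun s hs => hα ⟨a s, hs.symm⟩)
      (hlim.trans_lt (EReal.coe_lt_coe_iff.2 hρρ'))).mono fun s hs => ?_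
    rw [ha.abs_sub, ha.abs_sub] at hs
    rw [Real.sq_sqrt hρ'0]
    exact hs.le
  exact ⟨a ∘ fastStages f, ha.comp_strictMono (computable_fastStages hfc) (fastStages_strictMono f),
    √ρ', (Real.sqrt_lt' one_pos).2 (by rwa [one_pow]),
    frequently_fastStages_contract hf ha.antitone_sub (Real.sqrt_nonneg ρ') hfreq⟩

theorem IsLeftCEApprox.isSpeedable {b : ℕ → ℚ} {α : ℝ} (hb : IsLeftCEApprox b α)
    (h : IsSuccSpeedable b α) : IsSpeedable b α := by
  obtain ⟨σ, hσ, hfreq⟩ := h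
  obtain ⟨ρ, hρ, hρ1⟩ := exists_rat_btwn (max_lt hσ zero_lt_one)
  have hρ0 : (0 : ℝ) ≤ ρ := (le_max_right σ 0).trans hρ.le
  refine ⟨ρ, mod_cast hρ0, mod_cast hρ1, .inr ⟨Nat.succ,
    ⟨Computable.succ, Order.succ_mono, tendsto_add_atTop_nat 1⟩,
    speedLiminf_le_of_frequently hρ0 (hfreq.mono fun k hk => ?_)⟩⟩
  rw [hb.abs_sub, hb.abs_sub]
  exact hk.trans (mul_le_mul_of_nonneg_right ((le_max_left σ 0).trans hρ.le)
    (sub_nonneg.2 (hb.cast_le k)))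

namespace SolovayTest

/-- Each left endpoint lies beyond the previous one by at least a fixed positive proportion of the
length of the previous interval. -/
def HasBoundedIncrements (T : SolovayTest) : Prop :=
  ∃ d : ℚ, 0 < d ∧ ∀ i, T.l i + d * (T.r i - T.l i) ≤ T.l (i + 1)

variable {T : SolovayTest} {γ : ℝ}

theorem HasBoundedIncrements.monotone_l (hT : T.HasBoundedIncrements) : Monotone T.l := by
  obtain ⟨d, hd, hinc⟩ := hT
  refine monotone_nat_of_le_succ fun i => ?_
  exact (le_add_of_nonneg_right (mul_nonneg hd.le (sub_nonneg.2 (T.le i)))).trans (hinc i)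

theorem tendsto_length (T : SolovayTest) : Tendsto (fun i => (T.r i : ℝ) - T.l i) atTop (nhds 0) :=
  T.summable.tendsto_atTop_zero

theorem Covers.tendsto_l (hcov : T.Covers γ) (hmono : Monotone T.l) :
    Tendsto (fun i => (T.l i : ℝ)) atTop (nhds γ) := by
  have hl : Monotone fun i => (T.l i : ℝ) := Rat.cast_mono.comp hmono
  refine tendsto_atTop_isLUB hl ⟨?_, fun u hu => ?_⟩
  · rintro _ ⟨i, rfl⟩
    obtain ⟨j, hij, hj⟩ := frequently_atTop.1 hcov i
    exact (hl hij).trans hj.1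
  · refine le_of_forall_pos_lt_add fun ε hε => ?_
    obtain ⟨i, hi, hlen⟩ :=
      (hcov.and_eventually (T.tendsto_length.eventually_lt_const hε)).exists
    have hu : (T.l i : ℝ) ≤ u := hu ⟨i, rfl⟩
    linarith [hi.2]

theorem HasBoundedIncrements.isLeftCEApprox (hT : T.HasBoundedIncrements) (hcov : T.Covers γ) :
    IsLeftCEApprox T.l γ where
  isCompApprox := ⟨T.comp_l, T.mem_l, hcov.tendsto_l hT.monotone_l⟩
  monotone := hT.monotone_l

theorem HasBoundedIncrements.isSuccSpeedable (hT : T.HasBoundedIncrements) (hcov : T.Covers γ) :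
    IsSuccSpeedable T.l γ := by
  obtain ⟨d, hd, hinc⟩ := hT
  have hd' : (0 : ℝ) < d := Rat.cast_pos.2 hd
  refine ⟨1 - d, sub_lt_self 1 hd', hcov.mono fun i hi => ?_⟩
  calc γ - T.l (i + 1)
    _ ≤ γ - (T.l i + d * (T.r i - T.l i)) := sub_le_sub_left (mod_cast hinc i) γ
    _ ≤ γ - (T.l i + d * (γ - T.l i)) := by gcongr; exact hi.2
    _ = (1 - d) * (γ - T.l i) := by ring

end SolovayTest

theorem summable_succ_sub_of_monotone_of_le {u : ℕ → ℝ} (hu : Monotone u) {c : ℝ}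
    (hc : ∀ k, u k ≤ c) : Summable fun k => u (k + 1) - u k := by
  refine summable_of_sum_range_le (c := c - u 0) (fun k => sub_nonneg.2 (hu k.le_succ)) fun n => ?_
  rw [Finset.sum_range_sub]
  exact sub_le_sub_right (hc n) _

/-- The right endpoint of the interval starting at `b k` with `C` times the length of the step from
`b k` to `b (k + 1)`, cut off at `1` because Solovay tests live in the unit interval. -/
def incrementBound (b : ℕ → ℚ) (C k : ℕ) : ℚ :=
  min 1 (b k + C * (b (k + 1) - b k))

section IncrementBound

variable {b : ℕ → ℚ}

theorem computable_incrementBound (hb : Computable b) (C : ℕ) :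
    Computable (incrementBound b C) :=
  computable_rat_min.comp (.const 1) <| computable_rat_add.comp hb <|
    computable_rat_mul.comp (.const (C : ℚ)) <|
      computable_rat_sub.comp (hb.comp Computable.succ) hb

theorem le_incrementBound (hb : Monotone b) (C : ℕ) {k : ℕ} (hk : b k ≤ 1) :
    b k ≤ incrementBound b C k :=
  le_min hk <| le_add_of_nonneg_right <|
    mul_nonneg C.cast_nonneg (sub_nonneg.2 (hb k.le_succ))

theorem incrementBound_sub_le (b : ℕ → ℚ) (C k : ℕ) :
    incrementBound b C k - b k ≤ C * (b (k + 1) - b k) :=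
  sub_le_iff_le_add'.2 (min_le_right _ _)

theorem le_incrementBound_of_contract {α σ : ℝ} {C k : ℕ} (hα : α ≤ 1) (hk : b k ≤ α)
    (hσ : 1 ≤ C * (1 - σ)) (h : α - b (k + 1) ≤ σ * (α - b k)) : α ≤ incrementBound b C k := by
  have hstep : α - b k ≤ C * (b (k + 1) - b k) :=
    calc α - b k
      _ ≤ C * (1 - σ) * (α - b k) := le_mul_of_one_le_left (sub_nonneg.2 hk) hσ
      _ = C * ((α - b k) - σ * (α - b k)) := by ring
      _ ≤ C * (b (k + 1) - b k) := mul_le_mul_of_nonneg_left (by linarith) C.cast_nonneg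
  rw [incrementBound]
  push_cast
  exact le_min hα (sub_le_iff_le_add'.1 hstep)

end IncrementBound

namespace IsLeftCEApprox

variable {b : ℕ → ℚ} {α : ℝ}

protected theorem le_incrementBound (hb : IsLeftCEApprox b α) (C k : ℕ) :
    b k ≤ incrementBound b C k :=
  le_incrementBound hb.monotone C (hb.isCompApprox.2.1 k).2

theorem summable_incrementBound_sub (hb : IsLeftCEApprox b α) (C : ℕ) :
    Summable fun k => (incrementBound b C k : ℝ) - b k :=
  .of_nonneg_of_le (fun k => sub_nonneg.2 (Rat.cast_le.2 (hb.le_incrementBound C k)))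
    (fun k => mod_cast incrementBound_sub_le b C k)
    ((summable_succ_sub_of_monotone_of_le hb.monotone_cast hb.cast_le).mul_left (C : ℝ))

/-- The Solovay test formed by the intervals `[b k, incrementBound b C k]`. -/
def incrementTest (hb : IsLeftCEApprox b α) (C : ℕ) : SolovayTest where
  l := b
  r := incrementBound b C
  comp_l := hb.isCompApprox.1
  comp_r := computable_incrementBound hb.isCompApprox.1 C
  mem_l := hb.isCompApprox.2.1
  mem_r k := ⟨(hb.isCompApprox.2.1 k).1.trans (hb.le_incrementBound C k), min_le_left _ _⟩
  le := hb.le_incrementBound C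
  summable := hb.summable_incrementBound_sub C

theorem hasBoundedIncrements_incrementTest (hb : IsLeftCEApprox b α) {C : ℕ} (hC : 0 < C) :
    (hb.incrementTest C).HasBoundedIncrements := by
  have hC' : (0 : ℚ) < C := Nat.cast_pos.2 hC
  refine ⟨(C : ℚ)⁻¹, inv_pos.2 hC', fun k => ?_⟩
  have hlength : (C : ℚ)⁻¹ * (incrementBound b C k - b k) ≤ b (k + 1) - b k :=
    (inv_mul_le_iff₀ hC').2 (incrementBound_sub_le b C k)
  exact le_sub_iff_add_le'.1 hlength

theorem exists_covers_of_isSuccSpeedable (hb : IsLeftCEApprox b α) (h : IsSuccSpeedable b α) :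
    ∃ T : SolovayTest, T.HasBoundedIncrements ∧ T.Covers α := by
  obtain ⟨σ, hσ, hfreq⟩ := h
  have hσ' : 0 < 1 - σ := sub_pos.2 hσ
  obtain ⟨C, hC⟩ := exists_nat_gt (1 - σ)⁻¹
  have hC0 : 0 < C := Nat.cast_pos.1 ((inv_pos.2 hσ').trans hC)
  have hCσ : 1 ≤ C * (1 - σ) := (inv_le_iff_one_le_mul₀ hσ').1 hC.le
  exact ⟨hb.incrementTest C, hb.hasBoundedIncrements_incrementTest hC0, hfreq.mono fun k hk =>
    ⟨hb.cast_le k, le_incrementBound_of_contract hb.le_one (hb.cast_le k) hCσ hk⟩⟩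

end IsLeftCEApprox

theorem lce_speedable_iff_covered_by_bounded_increments_test (α : ℝ)
    (hα : α ∈ Set.Ioo (0 : ℝ) 1) :
    (∃ a : ℕ → ℚ, IsCompApprox a α ∧ Monotone a ∧ IsSpeedable a α) ↔
      ∃ T : SolovayTest,
        (∃ d : ℚ, 0 < d ∧ ∀ i, T.l i + d * (T.r i - T.l i) ≤ T.l (i + 1)) ∧
        T.Covers α := by
  constructor
  · rintro ⟨a, happrox, hmono, hspeed⟩
    obtain ⟨b, hb, hsucc⟩ := (IsLeftCEApprox.mk happrox hmono).exists_isSuccSpeedable hspeed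
    exact hb.exists_covers_of_isSuccSpeedable hsucc
  · rintro ⟨T, hinc, hcov⟩
    have hT : T.HasBoundedIncrements := hinc
    have happrox := hT.isLeftCEApprox hcov
    exact ⟨T.l, happrox.isCompApprox, happrox.monotone,
      happrox.isSpeedable (hT.isSuccSpeedable hcov)⟩
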